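/- Let f : ℝ² → ℝ be measurable with 0 ≤ f(y) ≤ A for a.e. y and ∫ f(y) dy = m > 0, and set ρ̄ = √(m/(π A)). Then for every x ∈ ℝ², ∫_{ℝ²} log((1 + |x−y|)/|x−y|) f(y) dy ≤ 2π A ∫₀^{ρ̄} ρ log((1+ρ)/ρ) dρ. -/

import Mathlib

/-!
The bathtub principle, by direct comparison. Write `g ρ = log ((1+ρ)/ρ)`, `r = √(m/(πA))`, and let
`h` be `A` times the indicator of the disk of centre `x` and radius `r`, so that `∫ h = m = ∫ f`.
Since `g` is decreasing and `0 ≤ f ≤ A`, one has `(g |x-y| - g r) (f y - h y) ≤ 0` for almost every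
`y`: inside the disk `g ≥ g r` and `f ≤ h`, outside `g ≤ g r` and `f ≥ h`. Hence
`g f ≤ g h + g r (f - h)`, whose last term integrates to zero; the integral of `g h` is computed in
polar coordinates. Integrability of `g` near the origin comes from the continuity of `ρ log ρ`.
-/

open MeasureTheory

noncomputable section

/-- Points of the plane `ℝ²` with the Euclidean norm. -/
abbrev Pt : Type := EuclideanSpace ℝ (Fin 2)

/-- The radial profile `log ((1+ρ)/ρ)` of the kernel. At `ρ = 0` its value is `0`, not `∞`. -/
def logKernel (ρ : ℝ) : ℝ := Real.log ((1 + ρ) / ρ)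

lemma logKernel_nonneg {ρ : ℝ} (h : 0 ≤ ρ) : 0 ≤ logKernel ρ := by
  rcases h.eq_or_lt with rfl | h
  · simp [logKernel]
  · apply Real.log_nonneg
    rw [le_div_iff₀ h]
    linarith

lemma logKernel_anti {a b : ℝ} (ha : 0 < a) (hab : a ≤ b) : logKernel b ≤ logKernel a := by
  have hb : 0 < b := ha.trans_le hab
  apply Real.log_le_log (by positivity)
  rw [div_le_div_iff₀ hb ha]
  nlinarith

lemma mul_logKernel_integrableOn (r : ℝ) :
    IntegrableOn (fun ρ : ℝ => ρ * logKernel ρ) (Set.Ioo 0 r) := by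
  have hc : ContinuousOn (fun ρ : ℝ => ρ * Real.log (1 + ρ) - ρ * Real.log ρ) (Set.Icc 0 r) := by
    apply ContinuousOn.sub
    · apply continuousOn_id.mul
      apply ContinuousOn.log (by fun_prop)
      intro y hy
      linarith [hy.1]
    · exact Real.continuous_mul_log.continuousOn
  refine (hc.integrableOn_Icc.mono_set Set.Ioo_subset_Icc_self).congr_fun ?_ measurableSet_Ioo
  intro y hy
  have h0 : 0 < y := hy.1
  simp only [logKernel]
  rw [Real.log_div (by positivity) h0.ne']
  ring

lemma logKernel_disk_integrable (r : ℝ) :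
    Integrable (fun z : Pt => (Metric.ball (0 : Pt) r).indicator (fun z => logKernel ‖z‖) z) := by
  rw [integrable_indicator_iff measurableSet_ball, integrableOn_fun_norm_addHaar]
  simpa using mul_logKernel_integrableOn r

lemma logKernel_disk_integral {r : ℝ} (hr : 0 ≤ r) :
    ∫ z : Pt, (Metric.ball (0 : Pt) r).indicator (fun z => logKernel ‖z‖) z
      = 2 * Real.pi * ∫ ρ in (0 : ℝ)..r, ρ * logKernel ρ := by
  have h1 : ∀ z : Pt, (Metric.ball (0 : Pt) r).indicator (fun z => logKernel ‖z‖) z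
      = (Set.Iio r).indicator logKernel ‖z‖ := by
    intro z
    simp [Set.indicator]
  simp_rw [h1]
  rw [integral_fun_norm_addHaar (volume : Measure Pt) ((Set.Iio r).indicator logKernel)]
  have hv : (volume : Measure Pt).real (Metric.ball 0 1) = Real.pi := by
    simp [Measure.real, InnerProductSpace.volume_ball_of_dim_even (k := 1), Real.pi_nonneg]
  have h2 : ∀ y : ℝ, y * (Set.Iio r).indicator logKernel y
      = (Set.Iio r).indicator (fun ρ => ρ * logKernel ρ) y := by
    intro y
    by_cases h : y < r <;> simp [h]
  rw [hv, intervalIntegral.integral_of_le hr, integral_Ioc_eq_integral_Ioo]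
  simp only [finrank_euclideanSpace, Fintype.card_fin, Nat.add_one_sub_one, pow_one, smul_eq_mul,
    nsmul_eq_mul, Nat.cast_ofNat, h2]
  rw [setIntegral_indicator measurableSet_Iio, Set.Ioi_inter_Iio]
  ring

/-- bathtub rearrangement estimate for the logarithmic kernel:
if `0 ≤ f ≤ A` a.e. and `∫ f = m > 0`, then with `ρ̄ = √(m/(πA))`,
`∫ log((1+|x−y|)/|x−y|) f(y) dy ≤ 2πA ∫₀^ρ̄ ρ log((1+ρ)/ρ) dρ` for every `x`. -/
theorem bathtub_log_kernel (f : Pt → ℝ) (hf : Measurable f) (A m : ℝ)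
    (hbound : ∀ᵐ y : Pt, 0 ≤ f y ∧ f y ≤ A)
    (hm : 0 < m) (hmass : (∫ y, f y) = m) :
    ∀ x : Pt,
      (∫ y, Real.log ((1 + ‖x - y‖) / ‖x - y‖) * f y) ≤
        2 * Real.pi * A *
          ∫ ρ in (0:ℝ)..Real.sqrt (m / (Real.pi * A)),
            ρ * Real.log ((1 + ρ) / ρ) := by
  intro x
  have hfi : Integrable f := by
    by_contra h
    rw [integral_undef h] at hmass
    exact hm.ne hmass
  have hA : 0 < A := by
    by_contra! h
    have : ∫ y, f y ≤ 0 := by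
      apply integral_nonpos_of_ae
      filter_upwards [hbound] with y hy
      exact hy.2.trans h
    linarith
  have hpi := Real.pi_pos
  set r := Real.sqrt (m / (Real.pi * A)) with hr
  have hr0 : 0 < r := Real.sqrt_pos.2 (by positivity)
  have hr2 : A * (Real.pi * r ^ 2) = m := by
    rw [hr, Real.sq_sqrt (by positivity)]
    field_simp
  let G : Pt → ℝ := (Metric.ball (0 : Pt) r).indicator (fun z => logKernel ‖z‖)
  let h : Pt → ℝ := (Metric.ball x r).indicator (fun _ => A)
  have hGi : Integrable (fun y => G (x - y)) := (logKernel_disk_integrable r).comp_sub_left x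
  have hGint : ∫ y, G (x - y) = 2 * Real.pi * ∫ ρ in (0 : ℝ)..r, ρ * logKernel ρ :=
    (integral_sub_left_eq_self G volume x).trans (logKernel_disk_integral hr0.le)
  have hhi : Integrable h :=
    (integrable_indicator_iff measurableSet_ball).2 (integrableOn_const measure_ball_lt_top.ne)
  have hhint : ∫ y, h y = m := by
    rw [integral_indicator measurableSet_ball, setIntegral_const, ← hr2]
    simp [Measure.real, InnerProductSpace.volume_ball_of_dim_even (k := 1), hr0.le, hpi.le]
    ring
  have hfh : Integrable (fun y => f y - h y) := hfi.sub hhi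
  have hle : ∫ y, Real.log ((1 + ‖x - y‖) / ‖x - y‖) * f y
      ≤ ∫ y, (A * G (x - y) + logKernel r * (f y - h y)) := by
    apply integral_mono_of_nonneg
    · filter_upwards [hbound] with y hy
      exact mul_nonneg (logKernel_nonneg (norm_nonneg _)) hy.1
    · exact (hGi.const_mul A).add (hfh.const_mul _)
    -- The centre is excluded: there the kernel has the junk value `0` and monotonicity fails.
    · filter_upwards [hbound, Measure.ae_ne volume x] with y hy hyx
      change logKernel ‖x - y‖ * f y ≤ _
      have hpos : 0 < ‖x - y‖ := norm_pos_iff.2 (sub_ne_zero.2 hyx.symm)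
      by_cases hb : ‖x - y‖ < r
      · have e1 : G (x - y) = logKernel ‖x - y‖ := by simp [G, hb]
        have e2 : h y = A := by simp [h, dist_eq_norm, norm_sub_rev y x, hb]
        rw [e1, e2]
        nlinarith [logKernel_anti hpos hb.le, hy.2]
      · have e1 : G (x - y) = 0 := by simp [G, hb]
        have e2 : h y = 0 := by simp [h, dist_eq_norm, norm_sub_rev y x, hb]
        rw [e1, e2]
        nlinarith [logKernel_anti hr0 (not_lt.1 hb), hy.1]
  refine hle.trans_eq ?_
  rw [integral_add (hGi.const_mul A) (hfh.const_mul _), integral_const_mul, integral_const_mul,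
    integral_sub hfi hhi, hGint, hhint, hmass]
  simp only [logKernel]
  ring
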